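/- arXiv:1807.07829 — 2 statements merged into one kernel-verified Lean document; each statement's English description precedes it below -/
import Mathlib

section
/- Let Z_Q be the set of values Σ_{x=1}^N Σ_{a=1}^d Tr((|ψ_x^a⟩⟨ψ_x^a| ⊗ |φ_x^a⟩⟨φ_x^a|) ρ) as ρ ranges over all density matrices on ℂ^{d·d} and, for each x, {ψ_x^a : a = 1,…,d} ranges over all orthonormal bases of ℂ^d (Alice's measurements), with Bob's orthonormal bases {φ_x^a} held fixed; and let Z_E be the set of values S_E := Σ_{x=1}^N Σ_{a=1}^d Σ_{λ∈Λ} p(λ) p_λ(a|x) ⟨φ_x^a, σ_λ φ_x^a⟩ over all local-hidden-state models. Then sup Z_Q ≥ (N / s_N^B) · sup Z_E; in particular the maximal quantum value of the steering functional exceeds the maximal LHS value by a factor of at least N / s_N^B. -/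
/-!
The inequality follows from `sup Z_E ≤ s_N^B` and `N ≤ sup Z_Q`.

For the first, an LHS value is a convex combination over hidden states `σ_λ`. For each of them,
replacing the stochastic response by the best deterministic one can only increase the value, and
a deterministic response selects `N` distinct projectors, one per setting. The value is then
`tr (A σ_λ)` with `A` a sum of `N` distinct projectors, hence at most `‖A‖ ≤ s_N^B`
(`re_trace_mul_le_opNorm`, `hidden_state_value_le`).

For the second, let Alice measure the complex conjugates of Bob's bases on the maximally entangled
state: every one of the `N d` terms equals `1 / d` (`trace_maxEntangled`). The set `Z_Q` is bounded
above since each term is at most the norm of a rank-one projection.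
-/

open scoped ComplexOrder

noncomputable section

/-- `|v⟩⟨v|`, the rank-one projection matrix associated with the vector `v`. -/
def rankOneProj {n : Type*} [Fintype n] (v : n → ℂ) : Matrix n n ℂ :=
  Matrix.vecMulVec v (star v)

/-- The operator (spectral) norm of a complex matrix. -/
def opNorm {n : Type*} [Fintype n] [DecidableEq n] (M : Matrix n n ℂ) : ℝ :=
  ‖Matrix.toEuclideanCLM (𝕜 := ℂ) (n := n) M‖

/-- A density matrix: positive semidefinite with unit trace. -/
def IsDensityMatrix {n : Type*} [Fintype n] [DecidableEq n] (ρ : Matrix n n ℂ) : Prop :=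
  ρ.PosSemidef ∧ ρ.trace = 1

/-- Orthonormality of a family of `d` vectors in `ℂ^d` (for each measurement setting). -/
def IsONBFamily {N d : ℕ} (φ : Fin N → Fin d → (Fin d → ℂ)) : Prop :=
  ∀ x a b, (∑ i, (starRingEnd ℂ) (φ x a i) * φ x b i) = if a = b then 1 else 0

/-- `s_k^B` : the maximal operator norm of a sum of `k` distinct projectors
`|φ_x^a⟩⟨φ_x^a|` drawn from the measurement eigenvectors `φ`. -/
def sMax {N d : ℕ} (φ : Fin N → Fin d → (Fin d → ℂ)) (k : ℕ) : ℝ :=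
  sSup { r : ℝ | ∃ T : Finset (Fin N × Fin d), T.card = k ∧
    r = opNorm (∑ q ∈ T, rankOneProj (φ q.1 q.2)) }

/-- `Re tr (A ρ) ≤ ‖A‖` for a density matrix `ρ`: writing `ρ = Bᴴ B`, the trace is
`∑ i, ⟨b_i, A b_i⟩` over the conjugated rows `b_i` of `B`, and `∑ i, ‖b_i‖² = tr ρ = 1`. -/
lemma re_trace_mul_le_opNorm {n : Type*} [Fintype n] [DecidableEq n] (A ρ : Matrix n n ℂ)
    (hρ : IsDensityMatrix ρ) : (Matrix.trace (A * ρ)).re ≤ opNorm A := by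
  obtain ⟨hpos, htr⟩ := hρ
  obtain ⟨B, rfl⟩ : ∃ B : Matrix n n ℂ, ρ = B.conjTranspose * B := by
    open scoped MatrixOrder in
    exact CStarAlgebra.nonneg_iff_eq_star_mul_self.mp hpos.nonneg
  let b : n → EuclideanSpace ℂ n := fun i => WithLp.toLp 2 (fun j => star (B i j))
  have h1 : Matrix.trace (A * (B.conjTranspose * B))
      = ∑ i, inner ℂ (b i) (Matrix.toEuclideanCLM (𝕜 := ℂ) (n := n) A (b i)) := by
    rw [← Matrix.mul_assoc, Matrix.trace_mul_comm]
    simp only [Matrix.trace, Matrix.diag, Matrix.mul_apply, PiLp.inner_apply]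
    refine Finset.sum_congr rfl fun i _ => Finset.sum_congr rfl fun j _ => ?_
    simp [b, Matrix.mulVec, dotProduct, mul_comm]
  have h2 : ∑ i, ‖b i‖ ^ 2 = 1 := by
    have : ((∑ i, ‖b i‖ ^ 2 : ℝ) : ℂ) = 1 := by
      rw [← htr, Matrix.trace_mul_comm]
      simp only [Matrix.trace, Matrix.diag, Matrix.mul_apply, EuclideanSpace.norm_sq_eq]
      push_cast
      refine Finset.sum_congr rfl fun i _ => Finset.sum_congr rfl fun j _ => ?_
      simp [b, Complex.mul_conj, Complex.normSq_eq_norm_sq]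
    exact_mod_cast this
  rw [h1, Complex.re_sum]
  calc _ ≤ ∑ i, opNorm A * ‖b i‖ ^ 2 := by
        refine Finset.sum_le_sum fun i _ => ?_
        refine (Complex.re_le_norm _).trans ((norm_inner_le_norm _ _).trans ?_)
        have := (Matrix.toEuclideanCLM (𝕜 := ℂ) (n := n) A).le_opNorm (b i)
        unfold opNorm
        nlinarith [norm_nonneg (b i)]
    _ = opNorm A := by rw [← Finset.mul_sum, h2, mul_one]

lemma opNorm_nonneg {n : Type*} [Fintype n] [DecidableEq n] (A : Matrix n n ℂ) :
    0 ≤ opNorm A := norm_nonneg _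

/-- The rank-one projection onto a unit vector has norm at most one, by the C⋆-identity. -/
lemma opNorm_rankOneProj_le_one {n : Type*} [Fintype n] [DecidableEq n] (v : n → ℂ)
    (hv : star v ⬝ᵥ v = 1) : opNorm (rankOneProj v) ≤ 1 := by
  have hstar : star (rankOneProj v) = rankOneProj v := by
    ext i j
    simp [rankOneProj, Matrix.vecMulVec_apply, Matrix.star_apply, mul_comm]
  have hmul : rankOneProj v * rankOneProj v = rankOneProj v := by
    simp [rankOneProj, Matrix.vecMulVec_mul_vecMulVec, hv]
  have h : opNorm (rankOneProj v) = opNorm (rankOneProj v) * opNorm (rankOneProj v) := by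
    have := CStarRing.norm_star_mul_self (x := Matrix.toEuclideanCLM (𝕜 := ℂ) (n := n) (rankOneProj v))
    rwa [← map_star, ← map_mul, hstar, hmul] at this
  nlinarith [opNorm_nonneg (rankOneProj v)]

lemma kronecker_rankOneProj {m n : Type*} [Fintype m] [Fintype n] (v : m → ℂ) (w : n → ℂ) :
    Matrix.kroneckerMap (· * ·) (rankOneProj v) (rankOneProj w)
      = rankOneProj (fun q : m × n => v q.1 * w q.2) := by
  ext i j
  simp [rankOneProj, Matrix.vecMulVec_apply]
  ring

lemma opNorm_le_sMax {N d : ℕ} (φ : Fin N → Fin d → (Fin d → ℂ)) (T : Finset (Fin N × Fin d)) :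
    opNorm (∑ q ∈ T, rankOneProj (φ q.1 q.2)) ≤ sMax φ T.card := by
  refine le_csSup ?_ ⟨T, rfl, rfl⟩
  refine ((Set.finite_range fun T : Finset (Fin N × Fin d) =>
    opNorm (∑ q ∈ T, rankOneProj (φ q.1 q.2))).subset ?_).bddAbove
  rintro _ ⟨T, -, rfl⟩
  exact ⟨T, rfl⟩

lemma sMax_nonneg {N d : ℕ} (φ : Fin N → Fin d → (Fin d → ℂ)) (k : ℕ) : 0 ≤ sMax φ k := by
  refine Real.sSup_nonneg ?_
  rintro _ ⟨T, -, rfl⟩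
  exact opNorm_nonneg _

/-- For a single hidden state, the stochastic response is dominated by the deterministic one that
picks, for each setting, the outcome whose projector has the largest expectation in `σ`; its
graph is a set of `N` distinct pairs. -/
lemma hidden_state_value_le {N d : ℕ} (hd : 1 ≤ d) (φ : Fin N → Fin d → (Fin d → ℂ))
    (r : Fin N → Fin d → ℝ) (hr : ∀ x a, 0 ≤ r x a) (hr1 : ∀ x, ∑ a, r x a = 1)
    (σ : Matrix (Fin d) (Fin d) ℂ) (hσ : IsDensityMatrix σ) :
    ∑ x, ∑ a, r x a * (Matrix.trace (rankOneProj (φ x a) * σ)).re ≤ sMax φ N := by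
  set t : Fin N → Fin d → ℝ := fun x a => (Matrix.trace (rankOneProj (φ x a) * σ)).re with ht
  have : Nonempty (Fin d) := ⟨⟨0, hd⟩⟩
  choose f hf using fun x => Finite.exists_max (t x)
  let T : Finset (Fin N × Fin d) :=
    Finset.univ.map ⟨fun x => (x, f x), fun x y h => congrArg Prod.fst h⟩
  have hT : T.card = N := by simp [T]
  have hsum : ∑ x, t x (f x)
      = (Matrix.trace ((∑ q ∈ T, rankOneProj (φ q.1 q.2)) * σ)).re := by
    simp [T, ht, Finset.sum_mul, Matrix.trace_sum]
    rfl
  calc ∑ x, ∑ a, r x a * t x a ≤ ∑ x, ∑ a, r x a * t x (f x) :=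
        Finset.sum_le_sum fun x _ => Finset.sum_le_sum fun a _ =>
          mul_le_mul_of_nonneg_left (hf x a) (hr x a)
    _ = ∑ x, t x (f x) := by simp [← Finset.sum_mul, hr1]
    _ ≤ opNorm (∑ q ∈ T, rankOneProj (φ q.1 q.2)) := hsum ▸ re_trace_mul_le_opNorm _ _ hσ
    _ ≤ sMax φ N := by simpa [hT] using opNorm_le_sMax φ T

/-- The unnormalised maximally entangled vector `∑ i, e_i ⊗ e_i`. -/
def maxEntangled (d : ℕ) : Fin d × Fin d → ℂ := fun q => if q.1 = q.2 then 1 else 0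

lemma isDensityMatrix_maxEntangled {d : ℕ} (hd : 1 ≤ d) :
    IsDensityMatrix ((d : ℂ)⁻¹ • rankOneProj (maxEntangled d)) := by
  have hd0 : (d : ℂ) ≠ 0 := by exact_mod_cast (by omega : d ≠ 0)
  refine ⟨(Matrix.posSemidef_vecMulVec_self_star _).smul ?_, ?_⟩
  · rw [inv_nonneg]
    exact Nat.cast_nonneg d
  · rw [Matrix.trace_smul]
    simp [rankOneProj, maxEntangled, Matrix.trace_vecMulVec, dotProduct, Fintype.sum_prod_type, hd0]

/-- `⟨Φ| (P̄ ⊗ P) |Φ⟩ = 1 / d` for the normalised maximally entangled state `Φ` and `P = |v⟩⟨v|`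
with `v` a unit vector, because `⟨v̄ ⊗ v, ∑ i, e_i ⊗ e_i⟩ = ⟨v, v⟩ = 1`. -/
lemma trace_maxEntangled {d : ℕ} (v : Fin d → ℂ)
    (hv : ∑ i, (starRingEnd ℂ) (v i) * v i = 1) :
    Matrix.trace (Matrix.kroneckerMap (· * ·) (rankOneProj (star v)) (rankOneProj v) *
      ((d : ℂ)⁻¹ • rankOneProj (maxEntangled d))) = (d : ℂ)⁻¹ := by
  have h : star (fun q : Fin d × Fin d => star v q.1 * v q.2) ⬝ᵥ maxEntangled d = 1 := by
    simpa [dotProduct, maxEntangled, Fintype.sum_prod_type, mul_comm] using hv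
  have h' : (fun q : Fin d × Fin d => star v q.1 * v q.2) ⬝ᵥ star (maxEntangled d) = 1 := by
    simpa [dotProduct, maxEntangled, Fintype.sum_prod_type, apply_ite] using hv
  rw [kronecker_rankOneProj, Matrix.mul_smul, Matrix.trace_smul]
  simp only [rankOneProj] at *
  rw [Matrix.vecMulVec_mul_vecMulVec, h, one_smul, Matrix.trace_vecMulVec, h']
  simp

/-- **Corollary (violation of the steering inequality).**
The maximal quantum value of the steering functional exceeds the maximal LHS
value by a factor of at least `N / s_N^B`. -/
theorem steering_violation
    (N d : ℕ) (hN : 1 ≤ N) (hd : 1 ≤ d)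
    (φ : Fin N → Fin d → (Fin d → ℂ)) (hφ : IsONBFamily φ)
    (ZQ ZE : Set ℝ)
    (hZQ : ZQ = { r : ℝ | ∃ ψ : Fin N → Fin d → (Fin d → ℂ), IsONBFamily ψ ∧
      ∃ ρ : Matrix (Fin d × Fin d) (Fin d × Fin d) ℂ, IsDensityMatrix ρ ∧
        r = ∑ x, ∑ a, (Matrix.trace
          (Matrix.kroneckerMap (· * ·) (rankOneProj (ψ x a)) (rankOneProj (φ x a)) * ρ)).re })
    (hZE : ZE = { r : ℝ | ∃ (Λ : Type) (_ : Fintype Λ) (p : Λ → ℝ)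
        (resp : Λ → Fin N → Fin d → ℝ) (σ : Λ → Matrix (Fin d) (Fin d) ℂ),
      (∀ l, 0 ≤ p l) ∧ (∑ l, p l = 1) ∧
      (∀ l x a, 0 ≤ resp l x a ∧ resp l x a ≤ 1) ∧
      (∀ l x, ∑ a, resp l x a = 1) ∧
      (∀ l, IsDensityMatrix (σ l)) ∧
      r = ∑ x, ∑ a, ∑ l, p l * resp l x a *
        (Matrix.trace (rankOneProj (φ x a) * σ l)).re }) :
    ((N : ℝ) / sMax φ N) * sSup ZE ≤ sSup ZQ := by
  have hs := sMax_nonneg φ N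
  have hE : sSup ZE ≤ sMax φ N := by
    refine Real.sSup_le ?_ hs
    rw [hZE]
    rintro _ ⟨Λ, _, p, resp, σ, hp, hp1, hr, hr1, hσ, rfl⟩
    calc _ = ∑ l, p l * ∑ x, ∑ a, resp l x a *
            (Matrix.trace (rankOneProj (φ x a) * σ l)).re := by
          simp_rw [Finset.mul_sum]
          rw [Finset.sum_comm]
          conv_rhs => rw [Finset.sum_comm]
          rw [Finset.sum_comm]
          refine Finset.sum_congr rfl fun x _ => ?_
          rw [Finset.sum_comm]
          simp only [mul_assoc]
      _ ≤ ∑ l, p l * sMax φ N := Finset.sum_le_sum fun l _ => mul_le_mul_of_nonneg_left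
          (hidden_state_value_le hd φ _ (fun x a => (hr l x a).1) (hr1 l) _ (hσ l)) (hp l)
      _ = sMax φ N := by rw [← Finset.sum_mul, hp1, one_mul]
  have hbdd : BddAbove ZQ := by
    refine ⟨∑ _x : Fin N, ∑ _a : Fin d, (1 : ℝ), ?_⟩
    rw [hZQ]
    rintro _ ⟨ψ, hψ, ρ, hρ, rfl⟩
    refine Finset.sum_le_sum fun x _ => Finset.sum_le_sum fun a _ => ?_
    refine (re_trace_mul_le_opNorm _ _ hρ).trans ?_
    rw [kronecker_rankOneProj]
    refine opNorm_rankOneProj_le_one _ ?_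
    have h1 := hψ x a a
    have h2 := hφ x a a
    rw [if_pos rfl] at h1 h2
    rw [← one_mul (1 : ℂ)]
    nth_rewrite 1 [← h1]
    rw [← h2, Finset.sum_mul_sum, dotProduct, Fintype.sum_prod_type]
    refine Finset.sum_congr rfl fun i _ => Finset.sum_congr rfl fun j _ => ?_
    simp only [Pi.star_apply, star_mul', starRingEnd_apply]
    ring
  have hQ : (N : ℝ) ≤ sSup ZQ := by
    refine le_csSup hbdd ?_
    rw [hZQ]
    refine ⟨fun x a => star (φ x a), ?_, _, isDensityMatrix_maxEntangled hd, ?_⟩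
    · intro x a b
      have h := congrArg (starRingEnd ℂ) (hφ x a b)
      rw [map_sum] at h
      simpa [apply_ite] using h
    · have hd0 : (d : ℝ) ≠ 0 := by exact_mod_cast (by omega : d ≠ 0)
      have h (x : Fin N) (a : Fin d) := trace_maxEntangled (φ x a) (by simpa using hφ x a a)
      have hre : ((d : ℂ)⁻¹).re = (d : ℝ)⁻¹ := by
        rw [← Complex.ofReal_natCast, ← Complex.ofReal_inv, Complex.ofReal_re]
      simp_rw [h, hre]
      simp [hd0]
  -- In the case `sMax φ N = 0` the quotient is the junk value `0` and the bound is trivial.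
  calc (N : ℝ) / sMax φ N * sSup ZE ≤ N / sMax φ N * sMax φ N := by gcongr
    _ ≤ N := by
        rcases hs.eq_or_lt with h | h
        · simp [← h]
        · rw [div_mul_cancel₀ _ h.ne']
    _ ≤ sSup ZQ := hQ
end
end

section
/- Let p, q, r, w ∈ ℝ^n have all entries nonnegative, and suppose p is weakly submajorized by r and q is weakly submajorized by w. Then Σ_{i=1}^n p_i q_i ≤ Σ_{i=1}^n r↓_i w↓_i, where v↓ denotes the decreasing rearrangement of v. -/
/-!
Write `v↓` for the decreasing rearrangement. The rearrangement inequality gives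
`∑ pᵢ qᵢ ≤ ∑ p↓ᵢ q↓ᵢ`. Since `q↓` is nonnegative and nonincreasing, summation by parts
(`sum_mul_le_of_partial_sums_le`) shows that enlarging the partial sums of the other factor
enlarges the pairing, so `∑ p↓ᵢ q↓ᵢ ≤ ∑ r↓ᵢ q↓ᵢ`. The same argument with weights `r↓` gives
`∑ r↓ᵢ q↓ᵢ ≤ ∑ r↓ᵢ w↓ᵢ`.
-/

noncomputable section

/-- The decreasing rearrangement of a real vector. -/
def dSort {n : ℕ} (v : Fin n → ℝ) : Fin n → ℝ := fun i => v (Tuple.sort v i.rev)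

/-- The sum of the `k` largest entries of a real vector. -/
def topSum {n : ℕ} (v : Fin n → ℝ) (k : ℕ) : ℝ :=
  ∑ i ∈ Finset.univ.filter (fun i : Fin n => (i : ℕ) < k), dSort v i

/-- Abel summation as an inequality: with nonincreasing weights `c` and nonnegative partial sums
of `d`, the weighted sum dominates the next weight times the last partial sum. -/
lemma mul_sum_range_le_sum_range_mul (n : ℕ) (c d : ℕ → ℝ) (hc : Antitone c)
    (hd : ∀ k ≤ n, 0 ≤ ∑ i ∈ Finset.range k, d i) :
    ∀ m ≤ n, c m * ∑ i ∈ Finset.range m, d i ≤ ∑ i ∈ Finset.range m, c i * d i := by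
  intro m
  induction m with
  | zero => simp
  | succ m ih =>
    intro hm
    have h1 := ih (by omega)
    have h2 := mul_le_mul_of_nonneg_right (hc (Nat.le_succ m)) (hd (m + 1) hm)
    rw [Finset.sum_range_succ (fun i => c i * d i)]
    refine h2.trans ?_
    rw [Finset.sum_range_succ]
    linarith

lemma sum_mul_le_of_partial_sums_le {n : ℕ} (a b c : Fin n → ℝ) (hc : Antitone c)
    (hc0 : ∀ i, 0 ≤ c i)
    (hab : ∀ k, 1 ≤ k → k ≤ n →
      ∑ i ∈ Finset.univ.filter (fun i : Fin n => (i : ℕ) < k), a i ≤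
        ∑ i ∈ Finset.univ.filter (fun i : Fin n => (i : ℕ) < k), b i) :
    ∑ i, c i * a i ≤ ∑ i, c i * b i := by
  -- Extension by zero keeps `c` nonincreasing because `c` is nonnegative.
  let c' : ℕ → ℝ := fun i => if h : i < n then c ⟨i, h⟩ else 0
  let d' : ℕ → ℝ := fun i => if h : i < n then b ⟨i, h⟩ - a ⟨i, h⟩ else 0
  have hc' : Antitone c' := by
    intro i j hij
    by_cases hj : j < n
    · have hi : i < n := lt_of_le_of_lt hij hj
      simp only [c', hi, hj, dif_pos]
      exact hc hij
    · simp only [c', hj, dif_neg, not_false_eq_true]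
      split_ifs
      · exact hc0 _
      · exact le_rfl
  have hd' : ∀ k ≤ n, 0 ≤ ∑ i ∈ Finset.range k, d' i := by
    intro k hk
    rcases Nat.eq_zero_or_pos k with rfl | hk0
    · simp
    have h1 : ∑ i ∈ Finset.range k, d' i =
        ∑ i ∈ Finset.univ.filter (fun i : Fin n => (i : ℕ) < k), (b i - a i) := by
      rw [Finset.sum_filter]
      have h2 := Fin.sum_univ_eq_sum_range (fun i => if i < k then d' i else 0) n
      rw [← Finset.sum_filter (s := Finset.range n)] at h2
      have h3 : (Finset.range n).filter (· < k) = Finset.range k := by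
        ext i
        simp only [Finset.mem_filter, Finset.mem_range]
        omega
      rw [h3] at h2
      rw [← h2]
      simp [d']
    rw [h1, Finset.sum_sub_distrib]
    linarith [hab k hk0 hk]
  have h := mul_sum_range_le_sum_range_mul n c' d' hc' hd' n le_rfl
  rw [← Fin.sum_univ_eq_sum_range (fun i => c' i * d' i) n] at h
  simp only [c', d', lt_irrefl, dif_neg, not_false_eq_true, zero_mul, Fin.is_lt, dif_pos,
    Fin.eta, mul_sub, Finset.sum_sub_distrib] at h
  linarith

lemma dSort_antitone {n : ℕ} (v : Fin n → ℝ) : Antitone (dSort v) :=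
  fun _ _ hij => Tuple.monotone_sort v (Fin.rev_le_rev.mpr hij)

lemma sum_mul_le_sum_dSort_mul_dSort {n : ℕ} (p q : Fin n → ℝ) :
    ∑ i, p i * q i ≤ ∑ i, dSort p i * dSort q i := by
  let σ : Equiv.Perm (Fin n) := Fin.revPerm.trans (Tuple.sort p)
  let τ : Equiv.Perm (Fin n) := Fin.revPerm.trans (Tuple.sort q)
  have hmono : Monovary (dSort p) (dSort q) :=
    (dSort_antitone p).monovary (dSort_antitone q)
  have h := hmono.sum_mul_comp_perm_le_sum_mul (σ := σ.trans τ.symm)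
  refine le_trans (le_of_eq ?_) h
  rw [← Equiv.sum_comp σ]
  refine Finset.sum_congr rfl fun i _ => ?_
  have hq : dSort q ((σ.trans τ.symm) i) = q (σ i) :=
    congrArg q (τ.apply_symm_apply (σ i))
  rw [hq]
  rfl

/-- **Double majorization inequality.** If `p` is weakly submajorized by `r` and `q` is
weakly submajorized by `w`, then `Σ pᵢ qᵢ ≤ Σ r↓ᵢ w↓ᵢ` for nonnegative vectors. -/
theorem inner_le_of_weakSubmajorize_pair
    (n : ℕ) (p q r w : Fin n → ℝ)
    (hp : ∀ i, 0 ≤ p i) (hq : ∀ i, 0 ≤ q i)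
    (hr : ∀ i, 0 ≤ r i) (hw : ∀ i, 0 ≤ w i)
    (hpr : ∀ k, 1 ≤ k → k ≤ n → topSum p k ≤ topSum r k)
    (hqw : ∀ k, 1 ≤ k → k ≤ n → topSum q k ≤ topSum w k) :
    ∑ i, p i * q i ≤ ∑ i, dSort r i * dSort w i := by
  refine (sum_mul_le_sum_dSort_mul_dSort p q).trans ?_
  have h1 := sum_mul_le_of_partial_sums_le (dSort p) (dSort r) (dSort q) (dSort_antitone q)
    (fun _ => hq _) hpr
  have h2 := sum_mul_le_of_partial_sums_le (dSort q) (dSort w) (dSort r) (dSort_antitone r)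
    (fun _ => hr _) hqw
  simp only [mul_comm (dSort q _)] at h1
  exact h1.trans h2
end
end
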